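/- Let R be an equitable ribbon with N boxes and l nonempty rows (so R has exactly N−l+1 nonempty columns). Then a partition λ lies in supp(R) if and only if λ is a partition of N with at most l nonzero parts and with largest part λ₁ at most N−l+1. -/

import Mathlib

/-- A skew shape `outer / inner`: the boxes of the Young diagram of `outer`
that are not boxes of the Young diagram of `inner`. -/
structure SkewShape where
  outer : YoungDiagram
  inner : YoungDiagram
  inner_le : inner ≤ outer

namespace SkewShape

/-- The set of boxes of a skew shape. -/
def cells (A : SkewShape) : Finset (ℕ × ℕ) := A.outer.cells \ A.inner.cells

/-- The size of a skew shape is its number of boxes. -/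
def size (A : SkewShape) : ℕ := A.cells.card

/-- The length of row `i` of a skew shape. -/
def rowLen (A : SkewShape) (i : ℕ) : ℕ := (A.cells.filter fun c => c.1 = i).card

/-- The length of column `j` of a skew shape. -/
def colLen (A : SkewShape) (j : ℕ) : ℕ := (A.cells.filter fun c => c.2 = j).card

/-- The set of indices of nonempty rows. -/
def rowSet (A : SkewShape) : Finset ℕ := A.cells.image Prod.fst

/-- The set of indices of nonempty columns. -/
def colSet (A : SkewShape) : Finset ℕ := A.cells.image Prod.snd

/-- The number of nonempty rows. -/
def numRows (A : SkewShape) : ℕ := A.rowSet.card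

/-- The number of nonempty columns. -/
def numCols (A : SkewShape) : ℕ := A.colSet.card

/-- `rows A`: the multiset of lengths of the nonempty rows of `A`
(equivalently, that sequence sorted into weakly decreasing order). -/
def rows (A : SkewShape) : Multiset ℕ := A.rowSet.val.map A.rowLen

/-- `cols A`: the multiset of lengths of the nonempty columns of `A`. -/
def cols (A : SkewShape) : Multiset ℕ := A.colSet.val.map A.colLen

/-- A skew shape is disconnected if its boxes can be split into two nonempty
parts such that no box of one part shares a row or a column with a box of the
other part. -/
def Disconnected (A : SkewShape) : Prop :=
  ∃ B C : Finset (ℕ × ℕ), B.Nonempty ∧ C.Nonempty ∧ B ∪ C = A.cells ∧ B ∩ C = ∅ ∧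
    ∀ b ∈ B, ∀ c ∈ C, b.1 ≠ c.1 ∧ b.2 ≠ c.2

/-- A skew shape is connected if it is nonempty and not disconnected. -/
def Connected (A : SkewShape) : Prop := A.cells.Nonempty ∧ ¬ A.Disconnected

/-- A ribbon is a connected skew shape containing no 2×2 block of boxes. -/
def Ribbon (A : SkewShape) : Prop :=
  A.Connected ∧ ∀ i j : ℕ, ¬ ((i, j) ∈ A.cells ∧ (i, j + 1) ∈ A.cells ∧
    (i + 1, j) ∈ A.cells ∧ (i + 1, j + 1) ∈ A.cells)

/-- The lengths of any two nonempty rows differ by at most one. -/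
def RowEquitable (A : SkewShape) : Prop :=
  ∀ i ∈ A.rowSet, ∀ i' ∈ A.rowSet, A.rowLen i ≤ A.rowLen i' + 1

/-- The lengths of any two nonempty columns differ by at most one. -/
def ColEquitable (A : SkewShape) : Prop :=
  ∀ j ∈ A.colSet, ∀ j' ∈ A.colSet, A.colLen j ≤ A.colLen j' + 1

/-- Equitable: both row equitable and column equitable. -/
def Equitable (A : SkewShape) : Prop := A.RowEquitable ∧ A.ColEquitable

/-- A filling of a skew shape is semistandard if its entries are positive
integers, weakly increasing along rows and strictly increasing down columns. -/
def IsSsyt (A : SkewShape) (T : ℕ × ℕ → ℕ) : Prop :=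
  (∀ c ∈ A.cells, 1 ≤ T c) ∧
  (∀ i j j', (i, j) ∈ A.cells → (i, j') ∈ A.cells → j ≤ j' → T (i, j) ≤ T (i, j')) ∧
  (∀ i i' j, (i, j) ∈ A.cells → (i', j) ∈ A.cells → i < i' → T (i, j) < T (i', j))

end SkewShape

/-- `c` comes weakly before `d` in the reverse reading order (right to left
along rows, rows top to bottom). -/
def ReadsBefore (c d : ℕ × ℕ) : Prop := c.1 < d.1 ∨ (c.1 = d.1 ∧ d.2 ≤ c.2)

instance : DecidableRel ReadsBefore := fun c d => by unfold ReadsBefore; infer_instance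

namespace SkewShape

/-- The number of boxes of `A` filled with the entry `k` by the filling `T`. -/
def content (A : SkewShape) (T : ℕ × ℕ → ℕ) (k : ℕ) : ℕ :=
  (A.cells.filter fun c => T c = k).card

/-- A Littlewood--Richardson filling: a semistandard filling such that every
prefix of the reverse reading word contains at least as many `k`'s as
`(k+1)`'s, for every positive `k`. -/
def IsLR (A : SkewShape) (T : ℕ × ℕ → ℕ) : Prop :=
  A.IsSsyt T ∧ ∀ d ∈ A.cells, ∀ k : ℕ,
    (A.cells.filter fun c => T c = k + 2 ∧ ReadsBefore c d).card ≤
    (A.cells.filter fun c => T c = k + 1 ∧ ReadsBefore c d).card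

end SkewShape

/-- The `i`-th largest part (0-indexed) of a multiset of natural numbers,
i.e. the `i`-th entry of the multiset sorted into weakly decreasing order. -/
def part (lam : Multiset ℕ) (i : ℕ) : ℕ := (lam.sort (· ≥ ·)).getD i 0

namespace SkewShape

/-- The support of a skew shape `A`: the set of partitions `lam` (multisets of
positive integers) for which there exists an LR filling of `A` of content `lam`. -/
def supp (A : SkewShape) : Set (Multiset ℕ) :=
  {lam | 0 ∉ lam ∧ ∃ T : ℕ × ℕ → ℕ, A.IsLR T ∧ ∀ i : ℕ, A.content T (i + 1) = part lam i}

/-- The set of LR fillings of `A` of content `lam` (normalized to vanish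
outside the boxes of `A`). -/
def LRset (A : SkewShape) (lam : Multiset ℕ) : Set ((ℕ × ℕ) → ℕ) :=
  {T | A.IsLR T ∧ (∀ c, c ∉ A.cells → T c = 0) ∧ ∀ i : ℕ, A.content T (i + 1) = part lam i}

/-- `s_A − s_B` is Schur-positive: for every partition, the number of LR
fillings of `B` of that content is at most the number for `A`. -/
def SchurPosDiff (A B : SkewShape) : Prop :=
  ∀ lam : Multiset ℕ, (B.LRset lam).ncard ≤ (A.LRset lam).ncard

end SkewShape

/-- The sum of the `k` largest parts of a multiset of natural numbers. -/
def psum (lam : Multiset ℕ) (k : ℕ) : ℕ := ((lam.sort (· ≥ ·)).take k).sum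

/-- Dominance order: `DomLe lam mu` means `lam ⊴ mu`, i.e. for every `k` the
sum of the `k` largest parts of `lam` is at most that of `mu`. -/
def DomLe (lam mu : Multiset ℕ) : Prop := ∀ k : ℕ, psum lam k ≤ psum mu k

/-- The conjugate (transpose) of a partition given as a multiset: its parts
are the numbers `#{x ∈ lam | x ≥ j}` for `j = 1, 2, …`. -/
def conj (lam : Multiset ℕ) : Multiset ℕ :=
  ((Finset.range lam.sum).val.map fun j => Multiset.card (lam.filter fun x => j + 1 ≤ x)).filter
    fun y => y ≠ 0

def bump (f : ℕ → ℕ) (s : ℕ) : ℕ → ℕ := fun i => if i = s then f i + 1 else f i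

inductive Syt (D : ℕ → Prop) : ℕ → (ℕ → ℕ) → ℕ → Prop
  | one : Syt D 0 (bump (fun _ => 0) 0) 0
  | step {n : ℕ} {f : ℕ → ℕ} {t s : ℕ} : Syt D n f t → (D n ↔ t < s) → Antitone (bump f s) →
      Syt D (n + 1) (bump f s) s

theorem Syt.anti {D : ℕ → Prop} {n : ℕ} {f : ℕ → ℕ} {t : ℕ} (h : Syt D n f t) : Antitone f := by
  cases h with
  | one =>
    intro a b hab
    simp only [bump]
    split_ifs <;> omega
  | step _ _ h => exact h

theorem Syt.pos {D : ℕ → Prop} {n : ℕ} {f : ℕ → ℕ} {t : ℕ} (h : Syt D n f t) : 0 < f t := by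
  cases h <;> simp [bump]

def IsCjg (f g : ℕ → ℕ) : Prop := ∀ i j, j < f i ↔ i < g j

theorem IsCjg.symm {f g : ℕ → ℕ} (h : IsCjg f g) : IsCjg g f := fun i j => (h j i).symm

theorem IsCjg.anti {f g : ℕ → ℕ} (h : IsCjg f g) : Antitone g := by
  intro a b hab
  by_contra hc
  push Not at hc
  have h1 := (h (g a) b).2 hc
  have h2 := (h (g a) a).1 (by omega)
  omega

theorem IsCjg.unique {f g g' : ℕ → ℕ} (h : IsCjg f g) (h' : IsCjg f g') : g = g' := by
  funext j
  by_contra hc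
  rcases Nat.lt_or_gt_of_ne hc with h1 | h1
  · have := (h (g j) j).1 ((h' (g j) j).2 h1); omega
  · have := (h' (g' j) j).1 ((h (g' j) j).2 h1); omega

theorem IsCjg.bump {f g : ℕ → ℕ} (h : IsCjg f g) {s : ℕ} (hs : Antitone (bump f s)) :
    IsCjg (bump f s) (bump g (f s)) := by
  have hg : g (f s) = s := by
    have h1 : ¬ s < g (f s) := fun hh => by
      have := (h s (f s)).2 hh; omega
    rcases Nat.eq_zero_or_pos s with h0 | h0
    · omega
    · have h2 : f s < f (s - 1) := by
        have := hs (show s - 1 ≤ s by omega)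
        simp only [_root_.bump, if_true] at this
        rw [if_neg (by omega)] at this
        omega
      have := (h _ _).1 h2
      omega
  intro i j
  have h1 := h i j
  simp only [_root_.bump]
  split_ifs with h2 h3 h3
  · subst h2 h3; omega
  · subst h2; omega
  · subst h3; omega
  · exact h1

theorem Syt.transp {D : ℕ → Prop} {n : ℕ} {f : ℕ → ℕ} {t : ℕ} (h : Syt D n f t) :
    ∃ g, IsCjg f g ∧ Syt (fun k => ¬ D k) n g (f t - 1) := by
  induction h with
  | one =>
    refine ⟨bump (fun _ => 0) 0, ?_, ?_⟩
    · intro i j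
      simp only [bump]
      split_ifs <;> omega
    · have := Syt.one (D := fun k => ¬ D k)
      simpa [bump] using this
  | @step n f t s hf hD ha ih =>
    obtain ⟨g, hc, hS⟩ := ih
    have hp := hf.pos
    have hfa := hf.anti
    refine ⟨bump g (f s), hc.bump ha, ?_⟩
    have e : bump f s s - 1 = f s := by simp [bump]
    rw [e]
    refine Syt.step hS ?_ (hc.bump ha).anti
    rw [hD]
    constructor
    · intro h
      have := hfa (show s ≤ t by omega)
      omega
    · intro h h'
      have := ha (show t ≤ s by omega)
      simp only [bump, if_true] at this
      rw [if_neg (by omega)] at this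
      omega

theorem Syt.word {D : ℕ → Prop} {n : ℕ} {f : ℕ → ℕ} {t : ℕ} (h : Syt D n f t) :
    ∃ w : ℕ → ℕ, w n = t ∧ (∀ i, ((Finset.range (n + 1)).filter fun m => w m = i).card = f i) ∧
      (∀ k ≤ n, ∀ i, ((Finset.range (k + 1)).filter fun m => w m = i + 1).card ≤
        ((Finset.range (k + 1)).filter fun m => w m = i).card) ∧
      ∀ k < n, (D k ↔ w k < w (k + 1)) := by
  induction h with
  | one =>
    refine ⟨fun _ => 0, rfl, ?_, ?_, ?_⟩
    · intro i
      by_cases hi : i = 0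
      · simp [bump, hi]
      · simp [bump, hi, Ne.symm hi]
    · intro k hk i
      simp
    · intro k hk; omega
  | @step n f t s hf hD ha ih =>
    obtain ⟨w, h1, h2, h3, h4⟩ := ih
    have key : ∀ k ≤ n, ∀ i, ((Finset.range (k + 1)).filter fun m => Function.update w (n+1) s m = i)
        = ((Finset.range (k + 1)).filter fun m => w m = i) := by
      intro k hk i
      apply Finset.filter_congr
      intro m hm
      rw [Finset.mem_range] at hm
      rw [Function.update_of_ne (by omega)]
    have key2 : ∀ i, ((Finset.range (n + 1 + 1)).filter
        fun m => Function.update w (n+1) s m = i).card = bump f s i := by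
      intro i
      rw [Finset.range_add_one, Finset.filter_insert]
      simp only [Function.update_self]
      split_ifs with hi
      · rw [Finset.card_insert_of_notMem (by simp), key n le_rfl, h2]
        simp [bump, hi]
      · rw [key n le_rfl, h2]
        simp [bump, Ne.symm hi]
    refine ⟨Function.update w (n+1) s, by simp, key2, ?_, ?_⟩
    · intro k hk i
      rcases Nat.lt_or_ge n k with h | h
      · obtain rfl : k = n + 1 := by omega
        rw [key2, key2]
        exact ha (by omega)
      · rw [key k h, key k h]
        exact h3 k h i
    · intro k hk
      rw [Function.update_of_ne (show k ≠ n + 1 by omega)]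
      rcases Nat.lt_or_ge k n with h | h
      · rw [Function.update_of_ne (by omega)]
        exact h4 k h
      · obtain rfl : k = n := by omega
        rw [Function.update_self, hD, h1]

theorem Syt.strip {D : ℕ → Prop} {n : ℕ} {f : ℕ → ℕ} {t : ℕ} (h : Syt D n f t) :
    ∀ (m : ℕ) (x : ℕ → ℕ), (∀ k, n ≤ k → k < n + m → ¬ D k) → (∀ i, t < i → x i = 0) →
      (∑ i ∈ Finset.range (t + 1), x i = m) → (∀ i, f (i + 1) + x (i + 1) ≤ f i) →
      ∃ t', Syt D (n + m) (fun i => f i + x i) t' ∧ (0 < x t' ∨ t' = t) ∧ ∀ i, 0 < x i → t' ≤ i := by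
  intro m
  induction m with
  | zero =>
    intro x _ h0 hs hx
    have hz : ∀ i, x i = 0 := by
      intro i
      rcases Nat.lt_or_ge t i with h | h
      · exact h0 i h
      · rw [Finset.sum_eq_zero_iff] at hs
        exact hs i (by simp; omega)
    refine ⟨t, ?_, Or.inr rfl, fun i hi => ?_⟩
    · simpa [hz] using h
    · have := hz i; omega
  | succ m ih =>
    intro x hD h0 hs hx
    have hex : ∃ s, 0 < x s := by
      by_contra hc
      push Not at hc
      rw [Finset.sum_eq_zero (fun i _ => by have := hc i; omega)] at hs
      omega
    classical
    obtain ⟨s, hs0, hmin⟩ : ∃ s, 0 < x s ∧ ∀ i, 0 < x i → s ≤ i :=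
      ⟨Nat.find hex, Nat.find_spec hex, fun i hi => Nat.find_min' hex hi⟩
    have hst : s ≤ t := by
      by_contra hc
      have := h0 s (by omega)
      omega
    let x' : ℕ → ℕ := fun i => if i = s then x i - 1 else x i
    have hb : bump x' s = x := by
      funext i
      simp only [bump, x']
      split_ifs with h
      · subst h; omega
      · rfl
    have hle : ∀ i, x' i ≤ x i := by
      intro i
      simp only [x']; split_ifs <;> omega
    have hsum : ∑ i ∈ Finset.range (t + 1), x' i = m := by
      have h1 : ∑ i ∈ Finset.range (t + 1), x i
          = ∑ i ∈ Finset.range (t + 1), (x' i + if i = s then 1 else 0) := by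
        apply Finset.sum_congr rfl
        intro i _
        simp only [x']
        split_ifs with h
        · subst h; omega
        · rfl
      rw [Finset.sum_add_distrib, Finset.sum_ite_eq', if_pos (by simp; omega)] at h1
      omega
    obtain ⟨t', hS, ht', _⟩ := ih x' (fun k h1 h2 => hD k h1 (by omega))
      (fun i hi => by have := hle i; have := h0 i hi; omega) hsum
      (fun i => by have := hle (i+1); have := hx i; omega)
    have e : (fun i => f i + x i) = bump (fun i => f i + x' i) s := by
      funext i
      have := congrFun hb i
      simp only [bump] at this ⊢
      split_ifs at this ⊢ <;> omega
    refine ⟨s, ?_, Or.inl hs0, hmin⟩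
    rw [e, ← add_assoc]
    refine Syt.step hS ?_ ?_
    · have h1 : ¬ D (n + m) := hD _ (by omega) (by omega)
      have h2 : s ≤ t' := by
        rcases ht' with h | h
        · exact hmin _ (by have := hle t'; omega)
        · omega
      simp only [h1, false_iff]; omega
    · rw [← e]
      apply antitone_nat_of_succ_le
      intro i
      have := hx i
      omega

theorem choose_uvy (l q c S Sq l0 l1 lq : ℕ) (hq1 : 1 ≤ q) (hql : q ≤ l) (hc : 1 ≤ c)
    (hlq : 1 ≤ lq) (h1 : lq ≤ l1) (h0 : l1 ≤ l0) (F1 : c ≤ l0) (F2 : l1 + l ≤ S + 1)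
    (F3 : lq + (l - q) + Sq ≤ S + c) (F4 : l0 + lq + (q - 1) ≤ S + c) (F5 : Sq + 2 * (l - q) ≤ S)
    (F6 : q = l → Sq = S) (B0 : l0 + l ≤ S + c) :
    ∃ u y v, u + y + v = c ∧ 1 ≤ v ∧ v ≤ lq ∧ u + l1 ≤ l0 ∧ y + lq ≤ l1 ∧ l0 + l ≤ S + 1 + u ∧
      (q = l → v = lq) ∧ (v < lq → lq - v + (l - 1 - q) + Sq < S) ∧
      (2 ≤ c → lq + (l - q) + Sq < S + c → lq < l0 → v < c) := by
  obtain ⟨v, hv⟩ : ∃ v, v = max 1 (max (lq + Sq + l - q - S) (c + lq - l0)) := ⟨_, rfl⟩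
  obtain ⟨u, hu⟩ : ∃ u, u = min (l0 - l1) (c - v) := ⟨_, rfl⟩
  refine ⟨u, c - v - u, v, ?_, ?_, ?_, ?_, ?_, ?_, ?_, ?_, ?_⟩ <;> omega

theorem sum_split (g : ℕ → ℕ) (p : ℕ) : ∑ i ∈ Finset.range (p + 2), g i
    = g 0 + ∑ i ∈ Finset.range p, g (i + 1) + g (p + 1) := by
  rw [Finset.sum_range_succ, Finset.sum_range_succ']
  omega

theorem tele (f : ℕ → ℕ) (hf : Antitone f) (p : ℕ) :
    ∑ i ∈ Finset.range p, (f i - f (i + 1)) + f p = f 0 := by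
  induction p with
  | zero => simp
  | succ p ih =>
    rw [Finset.sum_range_succ]
    have := hf (show p ≤ p + 1 by omega)
    omega

theorem core (α : ℕ → ℕ) (D : ℕ → Prop) (L : ℕ) (hpos : ∀ i < L, 1 ≤ α i)
    (heq : ∀ i < L, ∀ j < L, α i ≤ α j + 1) (hint : ∀ i, 0 < i → i + 1 < L → 2 ≤ α i)
    (S : ℕ → ℕ) (hS0 : S 0 = 0) (hS : ∀ l, S (l + 1) = S l + α l)
    (hD1 : ∀ l, 1 ≤ l → l < L → D (S l - 1))
    (hD2 : ∀ l < L, ∀ k, S l ≤ k → k + 1 < S (l + 1) → ¬ D k) :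
    ∀ l, 1 ≤ l → l ≤ L → ∀ (f : ℕ → ℕ) (q : ℕ), Antitone f → 0 < f q → f (q + 1) = 0 → q < l →
      ∑ i ∈ Finset.range (q + 1), f i = S l → f 0 + l ≤ S l + 1 →
      ∃ t, Syt D (S l - 1) f t ∧
        (2 ≤ α (l - 1) → f q + (l - 1 - q) + S q < S l → f q < f 0 → t < q) := by
  intro l hl
  induction l, hl using Nat.le_induction with
  | base =>
    intro hL f q hf hfq hq1 hq hsum _
    obtain rfl : q = 0 := by omega
    have hz : ∀ i, 0 < i → f i = 0 := by
      intro i hi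
      have := hf (show 0 + 1 ≤ i by omega)
      omega
    simp only [zero_add, Finset.sum_range_one] at hsum
    obtain ⟨t', h1, _⟩ := (Syt.one (D := D)).strip (S 1 - 1) (fun i => if i = 0 then f 0 - 1 else 0)
      (fun k _ h2 => hD2 0 (by omega) k (by omega) (by simp only [zero_add] at h2 ⊢; omega))
      (fun i hi => by rw [if_neg (by omega)]) (by simp [hsum])
      (fun i => by simp [bump])
    refine ⟨t', ?_, fun _ _ h => by omega⟩
    convert h1 using 1
    · omega
    · funext i
      simp only [bump]
      split_ifs with h
      · subst h; omega
      · exact hz i (by omega)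
  | succ l hl ih =>
    intro hL f q hf hfq hq1 hq hsum hf0
    have ih := ih (by omega)
    rw [hS] at hsum hf0
    have hc := hpos l (by omega)
    -- S bounds
    have hSq : ∀ q, 1 ≤ q → ∀ k, q + k ≤ l → S q + 2 * k ≤ S (q + k) := by
      intro q hq k
      induction k with
      | zero => intro _; simp
      | succ k ihk =>
        intro hk
        have := ihk (by omega)
        have := hint (q + k) (by omega) (by omega)
        rw [← add_assoc, hS]
        omega
    have hSlow : ∀ b, (∀ i < L, b ≤ α i) → ∀ k ≤ l, k * b ≤ S k := by
      intro b hb k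
      induction k with
      | zero => intro _; simp
      | succ k ihk =>
        intro hk
        have := ihk (by omega)
        have := hb k (by omega)
        rw [hS, add_mul]
        omega
    have hSup : ∀ b k, k ≤ l → (∀ i < k, α i ≤ b) → S k ≤ k * b := by
      intro b k
      induction k with
      | zero => intro _ _; simp [hS0]
      | succ k ihk =>
        intro hk hb
        have := ihk (by omega) (fun i hi => hb i (by omega))
        have := hb k (by omega)
        rw [hS, add_mul]
        omega
    have hα0 := hpos 0 (by omega)
    have hS1 : S 1 = α 0 := by rw [hS 0, hS0]; omega
    have hSl : S 1 + 2 * (l - 1) ≤ S l := by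
      have := hSq 1 le_rfl (l - 1) (by omega)
      rwa [show 1 + (l - 1) = l by omega] at this
    rcases Nat.eq_zero_or_pos q with h0 | h0
    · subst h0
      simp only [zero_add, Finset.sum_range_one] at hsum
      omega
    obtain ⟨p, rfl⟩ : ∃ p, q = p + 1 := ⟨q - 1, by omega⟩
    set c := α l with hcdef
    have h10 : f 1 ≤ f 0 := hf (by omega)
    have hq1' : f (p + 1) ≤ f 1 := hf (by omega)
    have hsum' := hsum
    rw [sum_split] at hsum'
    have F1 : c ≤ f 0 := by
      have h1 : ∑ i ∈ Finset.range (p + 1 + 1), f i ≤ (p + 2) * f 0 := by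
        have := Finset.sum_le_card_nsmul (Finset.range (p + 1 + 1)) f (f 0)
          (fun i _ => hf (by omega))
        simpa using this
      have h2 := hSlow (c - 1) (fun i hi => by have := heq l (by omega) i hi; omega) l le_rfl
      by_contra hcon
      have h3 : (p + 2) * f 0 ≤ (l + 1) * (c - 1) := Nat.mul_le_mul (by omega) (by omega)
      rw [add_mul l 1 (c - 1)] at h3
      omega
    have F2 : f 1 + l ≤ S l + 1 := by
      have h1 : f 0 + f 1 ≤ S l + c := by
        rw [← hsum]
        rw [Finset.sum_range_succ', Finset.sum_range_succ']
        simp only [zero_add]; omega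
      have h2 := heq l (by omega) 0 (by omega)
      omega
    have F5 : S (p + 1) + 2 * (l - (p + 1)) ≤ S l := by
      have := hSq (p + 1) (by omega) (l - (p + 1)) (by omega)
      rwa [show p + 1 + (l - (p + 1)) = l by omega] at this
    have F3 : f (p + 1) + (l - (p + 1)) + S (p + 1) ≤ S l + c := by
      have h1 : (p + 2) * f (p + 1) ≤ S l + c := by
        have := Finset.card_nsmul_le_sum (Finset.range (p + 1 + 1)) f (f (p + 1))
          (fun i hi => hf (by rw [Finset.mem_range] at hi; omega))
        simp only [Finset.card_range, smul_eq_mul] at this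
        rw [hsum] at this
        exact this
      obtain ⟨k, hk⟩ : ∃ k, l = p + 1 + k := ⟨l - (p + 1), by omega⟩
      obtain ⟨T, hT⟩ : ∃ T, S l + c = S (p + 1) + T := ⟨S l + c - S (p + 1), by omega⟩
      have h2 : S (p + 1) ≤ (p + 1) * (T + 1 - 2 * k) := by
        apply hSup _ _ (by omega)
        intro i hi
        have := heq i (by omega) l (by omega)
        omega
      by_contra hcon
      have h3 : T + 1 ≤ f (p + 1) + k := by omega
      obtain ⟨e, he⟩ : ∃ e, T + 1 = 2 * k + e := ⟨T + 1 - 2 * k, by omega⟩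
      rw [show T + 1 - 2 * k = e by omega] at h2
      have h4 : k + e ≤ f (p + 1) := by omega
      have h5 := Nat.mul_le_mul_left (p + 2) h4
      have h6 : (p + 2) * (k + e) = p * k + (p + 1) * e + 2 * k + e := by ring
      have : 0 ≤ p * k := Nat.zero_le _
      omega
    have F4 : f 0 + f (p + 1) + (p + 1 - 1) ≤ S l + c := by
      have : p ≤ ∑ i ∈ Finset.range p, f (i + 1) := by
        have := Finset.card_nsmul_le_sum (Finset.range p) (fun i => f (i + 1)) 1
          (fun i hi => by
            rw [Finset.mem_range] at hi
            have := hf (show i + 1 ≤ p + 1 by omega)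
            omega)
        simpa using this
      omega
    obtain ⟨u, y, v, hc', hv1, hv2, hu, hy, hB, hE, hF, hDD⟩ :=
      choose_uvy l (p + 1) c (S l) (S (p + 1)) (f 0) (f 1) (f (p + 1)) (by omega) (by omega) hc
        hfq hq1' h10 F1 F2 F3 F4 F5 (fun h => by rw [h]) (by omega)
    obtain ⟨h, hh⟩ : ∃ h, h = f (p + 1) + y := ⟨_, rfl⟩
    obtain ⟨x, hx⟩ : ∃ x : ℕ → ℕ, x = fun i => if i = 0 then u else if i < p + 1 then
        min (f i) h - min (f (i + 1)) h else if i = p + 1 then v else 0 := ⟨_, rfl⟩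
    have hx0 : x 0 = u := by simp [hx]
    have hxp : x (p + 1) = v := by simp [hx]
    have hxz : ∀ i, p + 1 < i → x i = 0 := by
      intro i hi
      simp only [hx]
      rw [if_neg (by omega), if_neg (by omega), if_neg (by omega)]
    have hxm : ∀ i < p, x (i + 1) = min (f (i + 1)) h - min (f (i + 1 + 1)) h := by
      intro i hi
      simp only [hx]
      rw [if_neg (by omega), if_pos (by omega)]
    have hfz : ∀ i, p + 1 < i → f i = 0 := by
      intro i hi
      have := hf (show p + 1 + 1 ≤ i by omega)
      omega
    have hxf : ∀ i, x i + f (i + 1) ≤ f i := by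
      intro i
      rcases Nat.eq_zero_or_pos i with h1 | h1
      · subst h1; simpa [hx0] using hu
      obtain ⟨j, rfl⟩ : ∃ j, i = j + 1 := ⟨i - 1, by omega⟩
      have hj := hf (show j + 1 ≤ j + 1 + 1 by omega)
      rcases Nat.lt_trichotomy j p with h2 | h2 | h2
      · rw [hxm j h2]; omega
      · subst h2; rw [hxp]; omega
      · rw [hxz _ (by omega)]; omega
    have hxsum : ∑ i ∈ Finset.range (p + 1 + 1), x i = c := by
      rw [sum_split, hx0, hxp]
      have h1 : ∑ i ∈ Finset.range p, x (i + 1) = y := by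
        have h2 := tele (fun i => min (f (i + 1)) h)
          (fun a b hab => min_le_min_right h (hf (by omega))) p
        rw [Finset.sum_congr rfl (fun i hi => hxm i (Finset.mem_range.1 hi))]
        simp only [zero_add] at h2
        omega
      omega
    obtain ⟨m, hm⟩ : ∃ m : ℕ → ℕ, m = fun i => f i - x i := ⟨_, rfl⟩
    have hmx : ∀ i, m i + x i = f i := by
      intro i
      have := hxf i
      simp only [hm]; omega
    have hma : Antitone m := by
      apply antitone_nat_of_succ_le
      intro i
      have := hxf i
      have := hmx i
      have := hmx (i + 1)
      omega
    have hmsum : ∑ i ∈ Finset.range (p + 1 + 1), m i = S l := by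
      have : ∑ i ∈ Finset.range (p + 1 + 1), m i + ∑ i ∈ Finset.range (p + 1 + 1), x i
          = S l + c := by
        rw [← Finset.sum_add_distrib, ← hsum]
        exact Finset.sum_congr rfl (fun i _ => hmx i)
      omega
    have hm0 : m 0 + l ≤ S l + 1 := by
      have := hmx 0
      omega
    have hmp := hmx (p + 1)
    have hSpos : 1 ≤ S l := by omega
    -- induction step
    obtain ⟨t, hSyt, htq⟩ : ∃ t, Syt D (S l - 1) m t ∧ t < p + 1 := by
      rcases Nat.eq_zero_or_pos (m (p + 1)) with hz | hz
      · have hmp2 : 0 < m p := by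
          have := hmx p; have := hxf p; omega
        obtain ⟨t, ht, _⟩ := ih m p hma hmp2 hz (by omega)
          (by rw [Finset.sum_range_succ, hz] at hmsum; exact hmsum) hm0
        refine ⟨t, ht, ?_⟩
        have h1 := ht.pos
        by_contra hcon
        have := hma (show p + 1 ≤ t by omega)
        omega
      · have hne : p + 1 ≠ l := fun hpl => by have := hE hpl; omega
        have hmq2 : m (p + 1 + 1) = 0 := by
          have := hmx (p + 1 + 1); omega
        obtain ⟨t, ht, ht2⟩ := ih m (p + 1) hma hz hmq2 (by omega) hmsum hm0
        refine ⟨t, ht, ht2 (hint (l - 1) (by omega) (by omega)) ?_ ?_⟩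
        · have := hF (by omega); omega
        · have := hmx 0; omega
    have hstep : Syt D (S l - 1 + 1) (bump m (p + 1)) (p + 1) := by
      refine Syt.step hSyt ?_ ?_
      · simp only [htq, iff_true]
        exact hD1 l hl (by omega)
      · apply antitone_nat_of_succ_le
        intro i
        have := hxf i
        have h1 := hmx i
        have h2 := hmx (i + 1)
        simp only [bump]
        split_ifs with h3 h4 h4
        · omega
        · rw [h3, hxp] at h2
          rw [h3] at this ⊢
          omega
        · omega
        · omega
    have hx'f : ∀ i, bump m (p + 1) i + (if i = p + 1 then v - 1 else x i) = f i := by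
      intro i
      have := hmx i
      simp only [bump]
      split_ifs with h3
      · subst h3; omega
      · omega
    obtain ⟨t', h1, h2, h3⟩ := hstep.strip (c - 1) (fun i => if i = p + 1 then v - 1 else x i)
      (fun k hk1 hk2 => hD2 l (by omega) k (by omega) (by rw [hS]; omega))
      (fun i hi => by
        rw [if_neg (by omega)]; exact hxz i hi)
      (by
        rw [Finset.sum_range_succ] at hxsum ⊢
        have e : ∑ i ∈ Finset.range (p + 1), (if i = p + 1 then v - 1 else x i)
            = ∑ i ∈ Finset.range (p + 1), x i :=
          Finset.sum_congr rfl (fun i hi => if_neg (by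
            rw [Finset.mem_range] at hi; omega))
        rw [e, if_pos rfl]
        omega)
      (fun i => by
        rw [hx'f]
        have := hxf i
        have h1 := hmx i
        simp only [bump]
        split_ifs <;> omega)
    refine ⟨t', ?_, ?_⟩
    · convert h1 using 1
      · rw [hS]; omega
      · funext i; exact (hx'f i).symm
    · intro g1 g2 g3
      have hvc := hDD g1 (by rw [hS l] at g2; omega) g3
      obtain ⟨i, hi1, hi2⟩ : ∃ i < p + 1, 0 < x i := by
        by_contra hcon
        push Not at hcon
        rw [Finset.sum_range_succ, hxp, Finset.sum_eq_zero (fun i hi => by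
          have := hcon i (Finset.mem_range.1 hi); omega)] at hxsum
        omega
      have := h3 i (by rw [if_neg (by omega)]; exact hi2)
      omega

open Classical in
noncomputable def cnt (D : ℕ → Prop) : ℕ → ℕ
  | 0 => 0
  | k + 1 => cnt D k + if D k then 1 else 0

theorem cnt_pos {D : ℕ → Prop} {k : ℕ} (h : D k) : cnt D (k + 1) = cnt D k + 1 := by
  simp [cnt, h]

theorem cnt_neg {D : ℕ → Prop} {k : ℕ} (h : ¬ D k) : cnt D (k + 1) = cnt D k := by
  simp [cnt, h]

theorem cnt_mono (D : ℕ → Prop) : Monotone (cnt D) := by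
  apply monotone_nat_of_le_succ
  intro k
  simp [cnt]

theorem cnt_add (D : ℕ → Prop) (k : ℕ) : cnt D k + cnt (fun k => ¬ D k) k = k := by
  induction k with
  | zero => simp [cnt]
  | succ k ih =>
    by_cases h : D k
    · rw [cnt_pos h, cnt_neg (D := fun k => ¬ D k) (not_not.2 h)]; omega
    · rw [cnt_neg h, cnt_pos (D := fun k => ¬ D k) h]; omega

noncomputable def alp (D : ℕ → Prop) (n i : ℕ) : ℕ :=
  ((Finset.range (n + 1)).filter fun k => cnt D k = i).card

noncomputable def Sm (D : ℕ → Prop) (n i : ℕ) : ℕ :=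
  ((Finset.range (n + 1)).filter fun k => cnt D k < i).card

theorem Sm_succ (D : ℕ → Prop) (n i : ℕ) : Sm D n (i + 1) = Sm D n i + alp D n i := by
  unfold Sm alp
  rw [← Finset.card_union_of_disjoint]
  · congr 1
    ext k
    simp only [Finset.mem_filter, Finset.mem_union]
    constructor
    · rintro ⟨h1, h2⟩
      rcases Nat.lt_or_ge (cnt D k) i with h | h
      · exact Or.inl ⟨h1, h⟩
      · exact Or.inr ⟨h1, by omega⟩
    · rintro (⟨h1, h2⟩ | ⟨h1, h2⟩) <;> exact ⟨h1, by omega⟩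
  · rw [Finset.disjoint_left]
    intro k h1 h2
    simp only [Finset.mem_filter] at h1 h2
    omega

theorem lt_Sm (D : ℕ → Prop) (n i k : ℕ) (hk : k ≤ n) : cnt D k < i ↔ k < Sm D n i := by
  constructor
  · intro h
    have : Finset.range (k + 1) ⊆ (Finset.range (n + 1)).filter fun k => cnt D k < i := by
      intro j hj
      simp only [Finset.mem_filter, Finset.mem_range] at hj ⊢
      have := cnt_mono D (show j ≤ k by omega)
      omega
    have := Finset.card_le_card this
    rw [Finset.card_range] at this
    exact this
  · intro h
    by_contra hc
    have : ((Finset.range (n + 1)).filter fun k => cnt D k < i) ⊆ Finset.range k := by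
      intro j hj
      simp only [Finset.mem_filter, Finset.mem_range] at hj ⊢
      by_contra hj2
      have := cnt_mono D (show k ≤ j by omega)
      omega
    have := Finset.card_le_card this
    rw [Finset.card_range] at this
    unfold Sm at h
    omega

theorem alp_pos (D : ℕ → Prop) (n i : ℕ) (hi : i ≤ cnt D n) : 1 ≤ alp D n i := by
  have : ∀ m, m ≤ n → i ≤ cnt D m → ∃ k ≤ n, cnt D k = i := by
    intro m
    induction m with
    | zero =>
      intro _ h
      exact ⟨0, by omega, by simp [cnt] at h ⊢; omega⟩
    | succ m ih =>
      intro hm h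
      rcases Nat.lt_or_ge (cnt D m) i with h1 | h1
      · refine ⟨m + 1, hm, ?_⟩
        by_cases hd : D m
        · rw [cnt_pos hd] at h ⊢; omega
        · rw [cnt_neg hd] at h ⊢; omega
      · exact ih (by omega) h1
  obtain ⟨k, hk, hki⟩ := this n le_rfl hi
  exact Finset.card_pos.2 ⟨k, by simp; omega⟩

theorem half (D : ℕ → Prop) (n : ℕ)
    (heq : ∀ i ≤ cnt D n, ∀ j ≤ cnt D n, alp D n i ≤ alp D n j + 1)
    (hint : ∀ i, 0 < i → i < cnt D n → 2 ≤ alp D n i)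
    (f : ℕ → ℕ) (M : ℕ) (hf : Antitone f) (hM : f M = 0)
    (hsum : ∑ i ∈ Finset.range M, f i = n + 1) (hl : f (cnt D n + 1) = 0)
    (h0 : f 0 + cnt D n ≤ n + 1) : ∃ t, Syt D n f t := by
  have hSL : Sm D n (cnt D n + 1) = n + 1 := by
    unfold Sm
    rw [Finset.filter_true_of_mem, Finset.card_range]
    intro k hk
    rw [Finset.mem_range] at hk
    have := cnt_mono D (show k ≤ n by omega)
    omega
  have hex : ∃ m, f m = 0 := ⟨M, hM⟩
  obtain ⟨m, hm, hmin⟩ : ∃ m, f m = 0 ∧ ∀ i, f i = 0 → m ≤ i :=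
    ⟨Nat.find hex, Nat.find_spec hex, fun i hi => Nat.find_min' hex hi⟩
  have hm0 : m ≠ 0 := by
    rintro rfl
    rw [Finset.sum_eq_zero (fun i _ => by have := hf (Nat.zero_le i); omega)] at hsum
    omega
  obtain ⟨q, rfl⟩ : ∃ q, m = q + 1 := ⟨m - 1, by omega⟩
  have hq : 0 < f q := by
    by_contra hc
    have := hmin q (by omega)
    omega
  have hsum2 : ∑ i ∈ Finset.range (q + 1), f i = n + 1 := by
    rw [← hsum]
    apply Finset.sum_subset
    · intro i hi
      have := hmin M hM
      simp only [Finset.mem_range] at hi ⊢; omega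
    · intro i _ hi
      simp only [Finset.mem_range] at hi
      have := hf (show q + 1 ≤ i by omega)
      omega
  obtain ⟨t, ht, _⟩ := core (alp D n) D (cnt D n + 1) (fun i hi => alp_pos D n i (by omega))
    (fun i hi j hj => heq i (by omega) j (by omega)) (fun i h1 h2 => hint i h1 (by omega))
    (Sm D n) (by simp [Sm]) (Sm_succ D n)
    (by
      intro l h1 h2
      have a1 : ¬ n < Sm D n l := fun h => by
        have := (lt_Sm D n l n le_rfl).2 h; omega
      have a2 : 0 < Sm D n l := (lt_Sm D n l 0 (by omega)).1 (by simp [cnt]; omega)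
      have a3 := (lt_Sm D n l (Sm D n l - 1) (by omega)).2 (by omega)
      have a4 : ¬ cnt D (Sm D n l) < l := fun h => by
        have := (lt_Sm D n l _ (by omega)).1 h; omega
      by_contra hc
      have := cnt_neg hc
      rw [show Sm D n l - 1 + 1 = Sm D n l by omega] at this
      omega)
    (by
      intro l hl k h1 h2 hd
      have a0 : Sm D n (l + 1) ≤ n + 1 := by
        unfold Sm
        exact (Finset.card_filter_le _ _).trans (by simp)
      have a1 : ¬ cnt D k < l := fun h => by
        have := (lt_Sm D n l k (by omega)).1 h; omega
      have a2 := (lt_Sm D n (l + 1) (k + 1) (by omega)).2 h2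
      rw [cnt_pos hd] at a2
      omega)
    (cnt D n + 1) (by omega) le_rfl f q hf hq hm
    (by
      by_contra hc
      have := hf (show cnt D n + 1 ≤ q by omega)
      omega)
    (by rw [hSL, hsum2]) (by rw [hSL]; omega)
  rw [hSL] at ht
  exact ⟨t, ht⟩

theorem exists_syt (D : ℕ → Prop) (n : ℕ)
    (heq : ∀ i ≤ cnt D n, ∀ j ≤ cnt D n, alp D n i ≤ alp D n j + 1)
    (heq' : ∀ i ≤ cnt (fun k => ¬ D k) n, ∀ j ≤ cnt (fun k => ¬ D k) n,
      alp (fun k => ¬ D k) n i ≤ alp (fun k => ¬ D k) n j + 1)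
    (f : ℕ → ℕ) (M : ℕ) (hf : Antitone f) (hM : f M = 0)
    (hsum : ∑ i ∈ Finset.range M, f i = n + 1) (hl : f (cnt D n + 1) = 0)
    (h0 : f 0 + cnt D n ≤ n + 1) : ∃ t, Syt D n f t := by
  by_cases hint : ∀ i, 0 < i → i < cnt D n → 2 ≤ alp D n i
  · exact half D n heq hint f M hf hM hsum hl h0
  push Not at hint
  obtain ⟨i, hi0, hin, hi2⟩ := hint
  -- a column of length three
  have h3 : ∃ j ≤ cnt (fun k => ¬ D k) n, 3 ≤ alp (fun k => ¬ D k) n j := by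
    have a1 : alp D n i = 1 := by
      have := alp_pos D n i (by omega); omega
    obtain ⟨k, hk⟩ := Finset.card_eq_one.1 a1
    have hk' : ∀ m, (m < n + 1 ∧ cnt D m = i) ↔ m = k := by
      intro m
      have := Finset.ext_iff.1 hk m
      simpa using this
    obtain ⟨hk1, hk2⟩ := (hk' k).2 rfl
    have hk0 : k ≠ 0 := by
      rintro rfl
      simp [cnt] at hk2; omega
    have hkn : k ≠ n := by rintro rfl; omega
    obtain ⟨m, rfl⟩ : ∃ m, k = m + 1 := ⟨k - 1, by omega⟩
    have d1 : D m := by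
      by_contra hd
      rw [cnt_neg hd] at hk2
      have := (hk' m).1 ⟨by omega, hk2⟩
      omega
    have d2 : D (m + 1) := by
      by_contra hd
      have := (hk' (m + 1 + 1)).1 ⟨by omega, by rw [cnt_neg hd, hk2]⟩
      omega
    have e1 := cnt_neg (D := fun k => ¬ D k) (not_not.2 d1)
    have e2 := cnt_neg (D := fun k => ¬ D k) (not_not.2 d2)
    refine ⟨cnt (fun k => ¬ D k) m, cnt_mono _ (by omega), ?_⟩
    have : ({m, m + 1, m + 1 + 1} : Finset ℕ) ⊆ (Finset.range (n + 1)).filter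
        fun k' => cnt (fun k => ¬ D k) k' = cnt (fun k => ¬ D k) m := by
      intro x hx
      simp only [Finset.mem_insert, Finset.mem_singleton] at hx
      simp only [Finset.mem_filter, Finset.mem_range]
      rcases hx with rfl | rfl | rfl
      · exact ⟨by omega, rfl⟩
      · exact ⟨by omega, e1⟩
      · exact ⟨by omega, by rw [e2, e1]⟩
    have := Finset.card_le_card this
    have h3 : ({m, m + 1, m + 1 + 1} : Finset ℕ).card = 3 := by
      rw [Finset.card_eq_three]
      exact ⟨m, m + 1, m + 1 + 1, by omega, by omega, by omega, rfl⟩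
    unfold alp
    omega
  obtain ⟨j, hj, hj3⟩ := h3
  have hcc := cnt_add D n
  -- the conjugate
  have hfM : ∀ i, M ≤ i → f i = 0 := fun i hi => by have := hf hi; omega
  obtain ⟨g, hg⟩ : ∃ g : ℕ → ℕ, g = fun j => ((Finset.range M).filter fun i => j < f i).card :=
    ⟨_, rfl⟩
  have hc : IsCjg f g := by
    intro a b
    rw [hg]
    constructor
    · intro h
      have : Finset.range (a + 1) ⊆ (Finset.range M).filter fun i => b < f i := by
        intro x hx
        simp only [Finset.mem_range, Finset.mem_filter] at hx ⊢
        have h2 := hf (show x ≤ a by omega)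
        refine ⟨?_, by omega⟩
        by_contra h3
        have := hfM x (by omega)
        omega
      have := Finset.card_le_card this
      rw [Finset.card_range] at this
      exact this
    · intro h
      by_contra h2
      have : ((Finset.range M).filter fun i => b < f i) ⊆ Finset.range a := by
        intro x hx
        simp only [Finset.mem_range, Finset.mem_filter] at hx ⊢
        by_contra h3
        have := hf (show a ≤ x by omega)
        omega
      have := Finset.card_le_card this
      rw [Finset.card_range] at this
      simp only at h
      omega
  have hgsum : ∑ j ∈ Finset.range (f 0), g j = n + 1 := by
    rw [← hsum, hg]
    simp only [Finset.card_filter]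
    rw [Finset.sum_comm]
    apply Finset.sum_congr rfl
    intro i _
    rw [← Finset.card_filter]
    have : (Finset.range (f 0)).filter (fun j => j < f i) = Finset.range (f i) := by
      ext x
      simp only [Finset.mem_range, Finset.mem_filter]
      have := hf (Nat.zero_le i)
      omega
    rw [this, Finset.card_range]
  have hgz : ∀ j, f 0 ≤ j → g j = 0 := by
    intro j hj
    by_contra h
    have := (hc 0 j).2 (by omega)
    omega
  have hg0 : g 0 ≤ cnt D n + 1 := by
    by_contra h
    have := (hc (cnt D n + 1) 0).2 (by omega)
    omega
  obtain ⟨t, ht⟩ := half (fun k => ¬ D k) n heq'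
    (fun i _ hi => by have := heq' j hj i (by omega); omega) g (f 0) hc.anti (hgz _ le_rfl)
    hgsum (hgz _ (by omega)) (by omega)
  obtain ⟨f', hf', hS⟩ := ht.transp
  obtain rfl := hf'.unique hc.symm
  exact ⟨g t - 1, by simpa using hS⟩

theorem cells_convex (A : SkewShape) {i j a b i' j' : ℕ} (h : (i, j) ∈ A.cells)
    (h' : (i', j') ∈ A.cells) (h1 : i ≤ a) (h2 : a ≤ i') (h3 : j ≤ b) (h4 : b ≤ j') :
    (a, b) ∈ A.cells := by
  simp only [SkewShape.cells, Finset.mem_sdiff, YoungDiagram.mem_cells] at h h' ⊢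
  exact ⟨A.outer.up_left_mem h2 h4 h'.1, fun hc => h.2 (A.inner.up_left_mem h1 h3 hc)⟩

theorem ribbon_end (A : SkewShape) (hA : A.Ribbon) {i j : ℕ} (h : (i, j) ∈ A.cells)
    (hb : (i + 1, j) ∉ A.cells) (hl : ∀ j', j' + 1 = j → (i, j') ∉ A.cells) :
    ∀ c ∈ A.cells, c.1 ≤ i ∧ j ≤ c.2 := by
  by_contra hcon
  apply hA.1.2
  refine ⟨A.cells.filter (fun c => c.1 ≤ i ∧ j ≤ c.2), A.cells.filter (fun c => ¬ (c.1 ≤ i ∧ j ≤ c.2)),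
    ⟨(i, j), by simp [h]⟩, ?_, Finset.filter_union_filter_not_eq _ _, ?_, ?_⟩
  · push Not at hcon
    obtain ⟨c, hc, hc2⟩ := hcon
    refine ⟨c, ?_⟩
    simp only [Finset.mem_filter]
    refine ⟨hc, fun h => ?_⟩
    have := hc2 h.1; omega
  · ext c
    simp only [Finset.mem_inter, Finset.mem_filter, Finset.notMem_empty, iff_false]
    tauto
  · rintro ⟨b1, b2⟩ hb' ⟨c1, c2⟩ hc'
    simp only [Finset.mem_filter] at hb' hc'
    obtain ⟨hbA, hb1, hb2⟩ := hb'
    obtain ⟨hcA, hc2⟩ := hc'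
    constructor
    · rintro rfl
      exact hl (j - 1) (by omega) (cells_convex A hcA h (by omega) le_rfl (by omega) (by omega))
    · rintro rfl
      exact hb (cells_convex A h hcA (by omega) (by omega) le_rfl (by omega))

theorem ribbon_diag (A : SkewShape) (hA : A.Ribbon) {i j i' j' : ℕ} (h : (i, j) ∈ A.cells)
    (h' : (i', j') ∈ A.cells) (he : (i : ℤ) - j = i' - j') : i = i' ∧ j = j' := by
  have key : ∀ i j i' j' : ℕ, (i, j) ∈ A.cells → (i', j') ∈ A.cells → i < i' → j < j' → False := by
    intro i j i' j' h h' h1 h2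
    exact hA.2 i j ⟨h, cells_convex A h h' (by omega) (by omega) (by omega) (by omega),
      cells_convex A h h' (by omega) (by omega) (by omega) (by omega),
      cells_convex A h h' (by omega) (by omega) (by omega) (by omega)⟩
  rcases Nat.lt_trichotomy i i' with h1 | h1 | h1
  · exact (key i j i' j' h h' h1 (by omega)).elim
  · omega
  · exact (key i' j' i j h' h h1 (by omega)).elim

theorem ribbon_path (A : SkewShape) (hA : A.Ribbon) :
    ∃ (p : ℕ → ℕ × ℕ) (n r0 c0 : ℕ) (D : ℕ → Prop),
      A.cells = (Finset.range (n + 1)).image p ∧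
      ∀ k ≤ n, (p k).1 = r0 + cnt D k ∧ (p k).2 + cnt (fun k => ¬ D k) k = c0 := by
  classical
  obtain ⟨a, ha, hamin⟩ := Finset.exists_min_image A.cells (fun c => (c.1 : ℤ) - c.2) hA.1.1
  obtain ⟨z, hz, hzmax⟩ := Finset.exists_max_image A.cells (fun c => (c.1 : ℤ) - c.2) hA.1.1
  obtain ⟨nx, hnx⟩ : ∃ nx : ℕ × ℕ → ℕ × ℕ, nx = fun c =>
    if (c.1 + 1, c.2) ∈ A.cells then (c.1 + 1, c.2) else (c.1, c.2 - 1) := ⟨_, rfl⟩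
  have hstep : ∀ c ∈ A.cells, (c.1 : ℤ) - c.2 < z.1 - z.2 → nx c ∈ A.cells ∧
      (((nx c).1 = c.1 + 1 ∧ (nx c).2 = c.2) ∨ ((nx c).1 = c.1 ∧ (nx c).2 + 1 = c.2)) := by
    rintro ⟨i, j⟩ hc hlt
    rw [hnx]
    simp only at hlt ⊢
    split_ifs with hb
    · exact ⟨hb, by simp⟩
    · by_cases hl : ∀ j', j' + 1 = j → (i, j') ∉ A.cells
      · have := ribbon_end A hA hc hb hl z hz
        omega
      · push Not at hl
        obtain ⟨j', rfl, hj'⟩ := hl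
        exact ⟨by simpa using hj', by simp⟩
  obtain ⟨p, hp0, hps⟩ : ∃ p : ℕ → ℕ × ℕ, p 0 = a ∧ ∀ k, p (k + 1) = nx (p k) :=
    ⟨fun k => nx^[k] a, rfl, fun k => Function.iterate_succ_apply' nx k a⟩
  obtain ⟨n, hn⟩ : ∃ n : ℕ, (n : ℤ) = (z.1 - z.2) - (a.1 - a.2) :=
    ⟨(((z.1 : ℤ) - z.2) - (a.1 - a.2)).toNat, by
      have := hamin z hz
      rw [Int.toNat_of_nonneg (by omega)]⟩
  have hp : ∀ k ≤ n, p k ∈ A.cells ∧ ((p k).1 : ℤ) - (p k).2 = a.1 - a.2 + k := by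
    intro k
    induction k with
    | zero => intro _; rw [hp0]; simpa using ha
    | succ k ih =>
      intro hk
      obtain ⟨h1, h2⟩ := ih (by omega)
      obtain ⟨h3, h4⟩ := hstep (p k) h1 (by omega)
      rw [hps]
      refine ⟨h3, ?_⟩
      push_cast
      omega
  refine ⟨p, n, a.1, a.2, fun k => (p (k + 1)).1 = (p k).1 + 1, ?_, ?_⟩
  · ext ⟨i, j⟩
    simp only [Finset.mem_image, Finset.mem_range]
    constructor
    · intro h
      have h1 := hamin _ h
      have h2 := hzmax _ h
      simp only at h1 h2
      obtain ⟨k, hk⟩ : ∃ k : ℕ, (k : ℤ) = ((i : ℤ) - j) - (a.1 - a.2) :=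
        ⟨(((i : ℤ) - j) - (a.1 - a.2)).toNat, by
          rw [Int.toNat_of_nonneg (by omega)]⟩
      have h3 := hp k (by omega)
      have := ribbon_diag A hA (i := (p k).1) (j := (p k).2) h3.1 h (by omega)
      exact ⟨k, by omega, Prod.ext this.1 this.2⟩
    · rintro ⟨k, hk, hk2⟩
      rw [← hk2]
      exact (hp k (by omega)).1
  · intro k
    induction k with
    | zero => intro _; simp [cnt, hp0]
    | succ k ih =>
      intro hk
      obtain ⟨h1, h2⟩ := ih (by omega)
      beta_reduce at h1 h2 ⊢
      obtain ⟨h3, h4⟩ := hp k (by omega)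
      obtain ⟨_, h6⟩ := hstep (p k) h3 (by omega)
      rw [← hps] at h6
      by_cases hD : (p (k + 1)).1 = (p k).1 + 1
      · rw [cnt_pos (D := fun k => (p (k + 1)).1 = (p k).1 + 1) hD,
          cnt_neg (D := fun k => ¬ (p (k + 1)).1 = (p k).1 + 1) (not_not.2 hD)]
        omega
      · rw [cnt_neg (D := fun k => (p (k + 1)).1 = (p k).1 + 1) hD,
          cnt_pos (D := fun k => ¬ (p (k + 1)).1 = (p k).1 + 1) hD]
        omega

theorem sum_getD (l : List ℕ) : ∀ M, l.length ≤ M → ∑ i ∈ Finset.range M, l.getD i 0 = l.sum := by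
  induction l with
  | nil => intro M _; simp
  | cons a l ih =>
    intro M hM
    rw [List.length_cons] at hM
    obtain ⟨m, rfl⟩ : ∃ m, M = m + 1 := ⟨M - 1, by omega⟩
    rw [Finset.sum_range_succ']
    simp only [List.getD_cons_succ, List.getD_cons_zero, List.sum_cons]
    rw [ih m (by omega)]
    omega

theorem part_sum (lam : Multiset ℕ) (M : ℕ) (hM : Multiset.card lam ≤ M) :
    ∑ i ∈ Finset.range M, part lam i = lam.sum := by
  unfold part
  rw [sum_getD _ _ (by simpa using hM), ← Multiset.sum_coe, Multiset.sort_eq]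

theorem part_zero (lam : Multiset ℕ) (i : ℕ) (h : Multiset.card lam ≤ i) : part lam i = 0 := by
  unfold part
  rw [List.getD_eq_default]
  simpa using h

theorem part_mem (lam : Multiset ℕ) (i : ℕ) (h : i < Multiset.card lam) : part lam i ∈ lam := by
  unfold part
  rw [List.getD_eq_getElem _ _ (by simpa using h), ← Multiset.mem_sort (r := (· ≥ ·))]
  exact List.getElem_mem _

theorem mem_part (lam : Multiset ℕ) (x : ℕ) (h : x ∈ lam) : ∃ i, part lam i = x := by
  rw [← Multiset.mem_sort (r := (· ≥ ·))] at h
  obtain ⟨i, hi, rfl⟩ := List.getElem_of_mem h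
  exact ⟨i, by unfold part; rw [List.getD_eq_getElem _ _ hi]⟩

theorem part_anti (lam : Multiset ℕ) : Antitone (part lam) := by
  intro i j hij
  rcases Nat.lt_or_ge j (Multiset.card lam) with h | h
  · rcases Nat.eq_or_lt_of_le hij with rfl | hlt
    · exact le_rfl
    unfold part
    have hp := Multiset.pairwise_sort lam (· ≥ ·)
    rw [List.getD_eq_getElem _ _ (by simpa using h),
      List.getD_eq_getElem _ _ (by simp; omega)]
    exact List.pairwise_iff_getElem.1 hp i j _ _ hlt
  · rw [part_zero _ _ h]; omega

/-- Let `R` be an equitable ribbon with `N` boxes and `l` nonempty rows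
(so `R` has exactly `N − l + 1` nonempty columns).  Then a partition `lam` lies in
`supp R` if and only if `lam` is a partition of `N` with at most `l` nonzero parts
and with largest part at most `N − l + 1`. -/
theorem support_of_equitable_ribbon (N l : ℕ) (R : SkewShape)
    (hrib : R.Ribbon) (heq : R.Equitable) (hsize : R.size = N) (hrows : R.numRows = l)
    (lam : Multiset ℕ) :
    R.numCols = N - l + 1 ∧
      (lam ∈ R.supp ↔
        lam.sum = N ∧ 0 ∉ lam ∧ Multiset.card lam ≤ l ∧ ∀ x ∈ lam, x ≤ N - l + 1) := by
  obtain ⟨p, n, r0, c0, D, hcells, hp⟩ := ribbon_path R hrib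
  have hcm := cnt_mono D
  have hcm' := cnt_mono (fun k => ¬ D k)
  have hca := cnt_add D
  have hinj : ∀ a ≤ n, ∀ b ≤ n, p a = p b → a = b := by
    intro a ha b hb hab
    have h1 := hp a ha
    have h2 := hp b hb
    have h3 := hca a
    have h4 := hca b
    rw [hab] at h1
    omega
  have hcard : ∀ (P : ℕ × ℕ → Prop) [DecidablePred P], (R.cells.filter P).card =
      ((Finset.range (n + 1)).filter fun k => P (p k)).card := by
    intro P _
    rw [hcells, Finset.filter_image, Finset.card_image_of_injOn]
    intro a ha b hb hab
    simp only [Finset.coe_filter, Finset.mem_range, Set.mem_ofPred_eq] at ha hb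
    exact hinj a (by omega) b (by omega) hab
  have hmem : ∀ c, c ∈ R.cells ↔ ∃ k ≤ n, p k = c := by
    intro c
    rw [hcells]
    simp only [Finset.mem_image, Finset.mem_range]
    constructor
    · rintro ⟨k, h1, h2⟩; exact ⟨k, by omega, h2⟩
    · rintro ⟨k, h1, h2⟩; exact ⟨k, by omega, h2⟩
  have hN : N = n + 1 := by
    rw [← hsize, SkewShape.size]
    have := hcard (fun _ => True)
    simpa using this
  have hval : ∀ (E : ℕ → Prop) i, i ≤ cnt E n → ∃ k ≤ n, cnt E k = i := by
    intro E i hi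
    have := alp_pos E n i hi
    obtain ⟨k, hk⟩ := Finset.card_pos.1 (show 0 < _ from this)
    simp only [Finset.mem_filter, Finset.mem_range] at hk
    exact ⟨k, by omega, hk.2⟩
  have hrow : R.rowSet = (Finset.range (cnt D n + 1)).image (fun i => r0 + i) := by
    ext i
    simp only [SkewShape.rowSet, Finset.mem_image, Finset.mem_range]
    constructor
    · rintro ⟨c, hc, rfl⟩
      obtain ⟨k, hk, rfl⟩ := (hmem c).1 hc
      have := hcm hk
      exact ⟨cnt D k, by omega, (hp k hk).1.symm⟩
    · rintro ⟨i, hi, rfl⟩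
      obtain ⟨k, hk, rfl⟩ := hval D i (by omega)
      exact ⟨p k, (hmem _).2 ⟨k, hk, rfl⟩, (hp k hk).1⟩
  have hcn : cnt (fun k => ¬ D k) n ≤ c0 := by
    have := (hp n le_rfl).2; omega
  have hcol : R.colSet = (Finset.range (cnt (fun k => ¬ D k) n + 1)).image (fun i => c0 - i) := by
    ext i
    simp only [SkewShape.colSet, Finset.mem_image, Finset.mem_range]
    constructor
    · rintro ⟨c, hc, rfl⟩
      obtain ⟨k, hk, rfl⟩ := (hmem c).1 hc
      have := hcm' hk
      have := (hp k hk).2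
      exact ⟨cnt (fun k => ¬ D k) k, by omega, by omega⟩
    · rintro ⟨i, hi, rfl⟩
      obtain ⟨k, hk, rfl⟩ := hval (fun k => ¬ D k) i (by omega)
      have := (hp k hk).2
      exact ⟨p k, (hmem _).2 ⟨k, hk, rfl⟩, by omega⟩
  have hl : l = cnt D n + 1 := by
    rw [← hrows, SkewShape.numRows, hrow, Finset.card_image_of_injective _
      (fun a b h => by simpa using h), Finset.card_range]
  have hnc : R.numCols = cnt (fun k => ¬ D k) n + 1 := by
    rw [SkewShape.numCols, hcol, Finset.card_image_of_injOn, Finset.card_range]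
    intro a ha b hb hab
    simp only [Finset.coe_range, Set.mem_Iio] at ha hb hab
    omega
  have hcan := hca n
  have hNl : N - l + 1 = cnt (fun k => ¬ D k) n + 1 := by omega
  have hrl : ∀ i ≤ cnt D n, R.rowLen (r0 + i) = alp D n i := by
    intro i hi
    rw [SkewShape.rowLen, hcard, alp]
    congr 1
    apply Finset.filter_congr
    intro k hk
    rw [Finset.mem_range] at hk
    rw [(hp k (by omega)).1]
    omega
  have hcl : ∀ i ≤ cnt (fun k => ¬ D k) n, R.colLen (c0 - i) = alp (fun k => ¬ D k) n i := by
    intro i hi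
    rw [SkewShape.colLen, hcard, alp]
    congr 1
    apply Finset.filter_congr
    intro k hk
    rw [Finset.mem_range] at hk
    have := (hp k (by omega)).2
    omega
  have hrb : ∀ a ≤ n, ∀ b ≤ n, (ReadsBefore (p a) (p b) ↔ a ≤ b) := by
    intro a ha b hb
    have h1 := hp a ha
    have h2 := hp b hb
    have h3 := hca a
    have h4 := hca b
    unfold ReadsBefore
    rcases Nat.le_total a b with h | h
    · have := hcm h
      have := hcm' h
      omega
    · have := hcm h
      have := hcm' h
      omega
  refine ⟨by omega, ?_⟩
  rw [hNl]
  constructor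
  · rintro ⟨h0, T, ⟨⟨hT1, hT2, hT3⟩, hT4⟩, hcont⟩
    have hTrow : ∀ k ≤ n, T (p k) ≤ cnt D k + 1 := by
      intro k
      induction k using Nat.strong_induction_on with
      | _ k ih =>
        intro hk
        have hkm := (hmem (p k)).2 ⟨k, hk, rfl⟩
        by_cases hv : T (p k) ≤ 1
        · omega
        push Not at hv
        by_cases hd : ∃ m, k = m + 1 ∧ ¬ D m
        · obtain ⟨m, rfl, hd⟩ := hd
          have h1 := ih m (by omega) (by omega)
          have h2 := hT2 (p m).1 (p (m + 1)).2 (p m).2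
          have e1 := hp m (by omega)
          have e2 := hp (m + 1) hk
          rw [cnt_neg hd] at e2 ⊢
          have e4 := hcm' (show m ≤ m + 1 by omega)
          have e3 : ((p m).1, (p (m + 1)).2) = p (m + 1) := Prod.ext (by simp; omega) rfl
          rw [e3] at h2
          have := h2 hkm ((hmem _).2 ⟨m, by omega, rfl⟩) (by omega)
          simp only [Prod.mk.eta] at this
          omega
        · have h1 := hT4 (p k) hkm (T (p k) - 2)
          have h2 : 0 < (R.cells.filter
              fun c => T c = T (p k) - 2 + 2 ∧ ReadsBefore c (p k)).card := by
            apply Finset.card_pos.2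
            refine ⟨p k, ?_⟩
            simp only [Finset.mem_filter]
            exact ⟨hkm, by omega, (hrb k hk k hk).2 le_rfl⟩
          obtain ⟨c, hc⟩ := Finset.card_pos.1 (lt_of_lt_of_le h2 h1)
          simp only [Finset.mem_filter] at hc
          obtain ⟨hc1, hc2, hc3⟩ := hc
          obtain ⟨m, hm, rfl⟩ := (hmem c).1 hc1
          have hmk := (hrb m hm k hk).1 hc3
          have hne : m ≠ k := by rintro rfl; omega
          obtain ⟨k', rfl⟩ : ∃ k', k = k' + 1 := ⟨k - 1, by omega⟩
          have hD : D k' := by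
            by_contra hh
            exact hd ⟨k', rfl, hh⟩
          have h3 := ih m (by omega) hm
          have h4 := hcm (show m ≤ k' by omega)
          rw [cnt_pos hD]
          omega
    have hcN : Multiset.card lam ≤ l := by
      by_contra hcon
      have h1 := part_mem lam l (by omega)
      have h2 : part lam l ≠ 0 := fun h => h0 (h ▸ h1)
      rw [← hcont, SkewShape.content] at h2
      obtain ⟨c, hc⟩ := Finset.card_pos.1 (Nat.pos_of_ne_zero h2)
      simp only [Finset.mem_filter] at hc
      obtain ⟨k, hk, rfl⟩ := (hmem c).1 hc.1
      have := hTrow k hk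
      have := hcm hk
      omega
    refine ⟨?_, h0, hcN, ?_⟩
    · rw [← part_sum lam l hcN, ← hsize, SkewShape.size]
      have h1 := Finset.card_eq_sum_card_fiberwise (s := R.cells) (t := Finset.range l)
        (f := fun c => T c - 1) (by
          intro c hc
          obtain ⟨k, hk, rfl⟩ := (hmem c).1 hc
          have := hTrow k hk
          have := hcm hk
          simp only [Finset.coe_range, Set.mem_Iio]
          omega)
      rw [h1]
      apply Finset.sum_congr rfl
      intro i _
      rw [← hcont, SkewShape.content]
      congr 1
      apply Finset.filter_congr
      intro c hc
      have := hT1 c hc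
      omega
    · intro x hx
      obtain ⟨i, rfl⟩ := mem_part lam x hx
      rw [← hcont, ← hnc, SkewShape.content, SkewShape.numCols]
      apply Finset.card_le_card_of_injOn Prod.snd
      · intro c hc
        simp only [Finset.coe_filter, Set.mem_ofPred_eq] at hc
        exact Finset.mem_coe.2 (Finset.mem_image_of_mem _ hc.1)
      · rintro ⟨a1, a2⟩ ha ⟨b1, b2⟩ hb hab
        simp only [Finset.coe_filter, Set.mem_ofPred_eq] at ha hb hab
        subst hab
        rcases Nat.lt_trichotomy a1 b1 with h | h | h
        · have := hT3 _ _ _ ha.1 hb.1 h; omega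
        · rw [h]
        · have := hT3 _ _ _ hb.1 ha.1 h; omega
  · rintro ⟨hsum, h0, hc, hx⟩
    refine ⟨h0, ?_⟩
    obtain ⟨t, ht⟩ := exists_syt D n
      (by
        intro i hi j hj
        rw [← hrl i hi, ← hrl j hj]
        apply heq.1
        · rw [hrow]; exact Finset.mem_image_of_mem _ (by simp; omega)
        · rw [hrow]; exact Finset.mem_image_of_mem _ (by simp; omega))
      (by
        intro i hi j hj
        rw [← hcl i hi, ← hcl j hj]
        apply heq.2
        · rw [hcol]; exact Finset.mem_image_of_mem (fun i => c0 - i) (by simp; omega)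
        · rw [hcol]; exact Finset.mem_image_of_mem (fun i => c0 - i) (by simp; omega))
      (part lam) (Multiset.card lam) (part_anti lam) (part_zero _ _ le_rfl)
      (by rw [part_sum _ _ le_rfl]; omega) (part_zero _ _ (by omega))
      (by
        rcases Nat.eq_zero_or_pos (Multiset.card lam) with h | h
        · rw [part_zero _ _ (by omega)]; omega
        · have := hx _ (part_mem lam 0 h)
          omega)
    obtain ⟨w, -, hw2, hw3, hw4⟩ := ht.word
    obtain ⟨T, hT⟩ : ∃ T : ℕ × ℕ → ℕ, ∀ k ≤ n, T (p k) = w k + 1 := by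
      refine ⟨fun c => w (c.1 - r0 + (c0 - c.2)) + 1, fun k hk => ?_⟩
      have := hp k hk
      have := hca k
      simp only
      congr 2
      omega
    have hwr : ∀ b d, b + d ≤ n → cnt D (b + d) = cnt D b → w (b + d) ≤ w b := by
      intro b d
      induction d with
      | zero => intro _ _; exact le_rfl
      | succ d ih =>
        intro h1 h2
        have h3 := hcm (show b ≤ b + d by omega)
        have h4 := hcm (show b + d ≤ b + (d + 1) by omega)
        have h5 := ih (by omega) (by omega)
        have h6 : ¬ D (b + d) := fun hd => by
          have := cnt_pos hd
          rw [add_assoc] at this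
          omega
        rw [hw4 _ (by omega)] at h6
        rw [← add_assoc]
        omega
    have hwc : ∀ b d, b + (d + 1) ≤ n →
        cnt (fun k => ¬ D k) (b + (d + 1)) = cnt (fun k => ¬ D k) b → w b < w (b + (d + 1)) := by
      intro b d
      induction d with
      | zero =>
        intro h1 h2
        rw [zero_add] at h2 ⊢
        have h6 : D b := by
          by_contra hd
          have := cnt_pos (D := fun k => ¬ D k) hd
          omega
        exact (hw4 _ (by omega)).1 h6
      | succ d ih =>
        intro h1 h2
        have h3 := hcm' (show b ≤ b + (d + 1) by omega)
        have h4 := hcm' (show b + (d + 1) ≤ b + (d + 1 + 1) by omega)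
        have h5 := ih (by omega) (by omega)
        have h6 : D (b + (d + 1)) := by
          by_contra hd
          have := cnt_pos (D := fun k => ¬ D k) hd
          rw [add_assoc b (d + 1) 1] at this
          omega
        rw [hw4 _ (by omega), add_assoc b (d + 1) 1] at h6
        omega
    refine ⟨T, ⟨⟨?_, ?_, ?_⟩, ?_⟩, ?_⟩
    · intro c hc
      obtain ⟨k, hk, rfl⟩ := (hmem c).1 hc
      rw [hT k hk]; omega
    · intro i j j' h1 h2 hj
      obtain ⟨a, ha, ha2⟩ := (hmem _).1 h1
      obtain ⟨b, hb, hb2⟩ := (hmem _).1 h2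
      rw [← ha2, ← hb2, hT a ha, hT b hb]
      have e1 := hp a ha
      have e2 := hp b hb
      have e3 := hca a
      have e4 := hca b
      rw [ha2] at e1
      rw [hb2] at e2
      simp only at e1 e2
      have := hwr b (a - b) (by omega)
      rw [show b + (a - b) = a by omega] at this
      have := this (by omega)
      omega
    · intro i i' j h1 h2 hi
      obtain ⟨a, ha, ha2⟩ := (hmem _).1 h1
      obtain ⟨b, hb, hb2⟩ := (hmem _).1 h2
      rw [← ha2, ← hb2, hT a ha, hT b hb]
      have e1 := hp a ha
      have e2 := hp b hb
      have e3 := hca a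
      have e4 := hca b
      rw [ha2] at e1
      rw [hb2] at e2
      simp only at e1 e2
      have := hwc a (b - a - 1) (by omega)
      rw [show a + (b - a - 1 + 1) = b by omega] at this
      have := this (by omega)
      omega
    · intro d hd k
      obtain ⟨a, ha, rfl⟩ := (hmem d).1 hd
      have key : ∀ v, (R.cells.filter fun c => T c = v + 1 ∧ ReadsBefore c (p a)).card
          = ((Finset.range (a + 1)).filter fun m => w m = v).card := by
        intro v
        rw [hcard]
        congr 1
        ext m
        simp only [Finset.mem_filter, Finset.mem_range]
        constructor
        · rintro ⟨h1, h2, h3⟩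
          rw [hT m (by omega)] at h2
          rw [hrb m (by omega) a ha] at h3
          omega
        · rintro ⟨h1, h2⟩
          rw [hT m (by omega), hrb m (by omega) a ha]
          omega
      rw [key (k + 1), key k]
      exact hw3 a ha k
    · intro i
      rw [← hw2, SkewShape.content, hcard]
      congr 1
      apply Finset.filter_congr
      intro m hm
      rw [Finset.mem_range] at hm
      rw [hT m (by omega)]
      omega
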